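/- Every holomorphic vector bundle over ℂP¹ splits as a direct sum of holomorphic line bundles O(a₁) ⊕ ⋯ ⊕ O(a_n); in particular every holomorphic line subbundle admits a holomorphic complement when the rank is at least 2. -/

import Mathlib

noncomputable section

/-!
The columns of `A` are to be global sections of twists of the bundle, and `B⁻¹` their
representatives around `∞`. Sections that are independent at `1` exist by a Wiener–Hopf argument:
if `r` is a long enough partial sum of the Laurent series of `g⁻¹`, then `g r = 1 - H` with `H`
small in `ℓ¹`, and the fixed point of a Toeplitz operator gives `U` with only negative powers of `z`
making `(1 - H) (1 + U)` entire, while `g⁻¹ (1 - H) (1 + U) = r (1 + U)` grows at most like a power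
of `z`.

Among such frames choose one of least total degree; the degrees are bounded below because a section
of negative degree pairs to zero with sections of the dual bundle. If its columns were dependent at
`z₀`, some combination of them would vanish there, and dividing it by `z - z₀` would give a section
of smaller degree to replace a column. Exchanging the two charts gives independence at `∞`.
-/

open Asymptotics Bornology Complex DiscreteConvolution Filter Function Metric Set Topology
open scoped Matrix Real

namespace BirkhoffFactorization

section Infinity

variable {E : Type*} [NormedAddCommGroup E]

theorem isBigO_zpow_zpow_cobounded {k l : ℤ} (hkl : k ≤ l) :
    (fun z : ℂ => z ^ k) =O[cobounded ℂ] fun z => z ^ l := by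
  refine IsBigO.of_bound 1 ?_
  filter_upwards [tendsto_norm_cobounded_atTop.eventually_ge_atTop 1] with z hz
  rw [norm_zpow, norm_zpow, one_mul]
  exact zpow_le_zpow_right₀ hz hkl

theorem isBigO_comp_inv_cobounded {e : ℂ → E} (he : ContinuousAt e 0) :
    (fun z => e z⁻¹) =O[cobounded ℂ] fun _ => (1 : ℂ) :=
  (he.tendsto.comp tendsto_inv₀_cobounded).isBigO_one ℂ

variable [NormedSpace ℂ E]

theorem isBigO_sub_inv_smul_cobounded {f : ℂ → E} {d : ℤ} (z₀ : ℂ)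
    (hf : f =O[cobounded ℂ] fun z => z ^ d) :
    (fun z => (z - z₀)⁻¹ • f z) =O[cobounded ℂ] fun z => z ^ (d - 1) := by
  have hinv : (fun z => (z - z₀)⁻¹) =O[cobounded ℂ] fun z => z⁻¹ :=
    (spectrum.resolvent_isBigO_inv z₀).congr_left fun z => by simp [resolvent]
  refine (hinv.smul hf).trans_eventuallyEq ?_
  filter_upwards [eventually_ne_cobounded 0] with z hz
  rw [smul_eq_mul, zpow_sub_one₀ hz, mul_comm]

variable [CompleteSpace E]

theorem exists_differentiable_eqOn_compl_zero {h : ℂ → E} (hd : DifferentiableOn ℂ h {0}ᶜ)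
    (hO : h =O[𝓝[≠] 0] fun _ => (1 : ℝ)) :
    ∃ e : ℂ → E, Differentiable ℂ e ∧ EqOn e h {0}ᶜ := by
  refine ⟨update h 0 (limUnder (𝓝[≠] 0) h), differentiableOn_univ.1 ?_,
    fun z hz => update_of_ne hz _ _⟩
  refine differentiableOn_update_limUnder_of_isLittleO univ_mem
    (hd.mono fun z hz => hz.2) ((hO.sub (isBigO_const_one ℝ (h 0) _)).trans_isLittleO ?_)
  refine (isLittleO_const_left.2 (Or.inr ?_))
  simpa only [comp_def, norm_inv, sub_zero] using
    tendsto_inv_nhdsGT_zero.comp (tendsto_norm_nhdsNE_zero (E := ℂ))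

theorem exists_differentiable_eq_zpow_smul_inv {h : ℂ → E} {d : ℤ}
    (hd : DifferentiableOn ℂ h {0}ᶜ) (hO : h =O[cobounded ℂ] fun z => z ^ d) :
    ∃ e : ℂ → E, Differentiable ℂ e ∧ ∀ z ≠ 0, h z = z ^ d • e z⁻¹ := by
  obtain ⟨e, he, heq⟩ := exists_differentiable_eqOn_compl_zero
    (h := fun w => w ^ d • h w⁻¹)
    ((differentiableOn_zpow d _ (Or.inl (by simp))).smul <|
      hd.comp differentiableOn_inv fun w hw => inv_ne_zero hw)
    (by
      refine ((isBigO_refl (fun w : ℂ => w ^ d) _).smul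
        (hO.comp_tendsto tendsto_inv₀_nhdsNE_zero)).trans (EventuallyEq.isBigO ?_ |>.trans
          (isBigO_const_one ℝ (1 : ℂ) _))
      filter_upwards [self_mem_nhdsWithin] with w hw
      simp [mul_inv_cancel₀ (zpow_ne_zero d hw)])
  refine ⟨e, he, fun z hz => ?_⟩
  simp only [heq (inv_ne_zero hz), inv_inv, inv_zpow, smul_inv_smul₀ (zpow_ne_zero d hz)]

end Infinity

section Laurent

variable {E : Type*} [NormedAddCommGroup E] [NormedSpace ℂ E]

/-- The Cauchy integral of `F` over the circle of radius `R` around `0`, evaluated at `z`; for `F`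
holomorphic off `0`, letting `R` vary splits `F` into its two Laurent parts. -/
def cauchyIntegral (F : ℂ → E) (R : ℝ) (z : ℂ) : E :=
  (2 * π * I : ℂ)⁻¹ • ∮ w in C(0, R), (w - z)⁻¹ • F w

variable {F : ℂ → E}

theorem cauchyIntegral_eq_cauchyIntegral (hF : DifferentiableOn ℂ F {0}ᶜ) {z : ℂ} {r R : ℝ}
    (hzr : ‖z‖ < r) (hrR : r ≤ R) : cauchyIntegral F R z = cauchyIntegral F r z := by
  have hd : ∀ w ∈ closedBall (0 : ℂ) R \ ball 0 r,
      DifferentiableAt ℂ (fun w => (w - z)⁻¹ • F w) w := by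
    intro w hw
    have hrw : r ≤ ‖w‖ := by simpa using hw.2
    have hw0 : w ≠ 0 := norm_pos_iff.1 (((norm_nonneg z).trans_lt hzr).trans_le hrw)
    have hwz : w - z ≠ 0 := sub_ne_zero.2 fun h => (hzr.trans_le hrw).ne (by rw [h])
    exact ((differentiableAt_id.sub_const z).inv hwz).smul
      (hF.differentiableAt (isOpen_compl_singleton.mem_nhds hw0))
  exact congrArg _ (circleIntegral_eq_of_differentiable_on_annulus_off_countable
    ((norm_nonneg z).trans_lt hzr) hrR countable_empty
    (fun w hw => (hd w hw).continuousAt.continuousWithinAt)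
    fun w hw => hd w ⟨ball_subset_closedBall hw.1.1, fun h => hw.1.2 (ball_subset_closedBall h)⟩)

theorem differentiableOn_cauchyIntegral [CompleteSpace E] {R : ℝ} (hR : 0 < R)
    (hF : ContinuousOn F (sphere 0 R)) :
    DifferentiableOn ℂ (cauchyIntegral F R) (ball 0 R) := by
  lift R to NNReal using hR.le
  have := (hasFPowerSeriesOn_cauchy_integral (c := 0) (hF.circleIntegrable hR.le)
    (NNReal.coe_pos.1 hR)).differentiableOn
  rwa [Metric.eball_coe] at this

theorem circleIntegral_dslope [CompleteSpace E] {R : ℝ} {z : ℂ} (hR : 0 ≤ R)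
    (hz : z ∉ sphere (0 : ℂ) R) (hF : ContinuousOn F (sphere 0 R)) :
    (∮ w in C(0, R), dslope F z w) =
      (∮ w in C(0, R), (w - z)⁻¹ • F w) - (∮ w in C(0, R), (w - z)⁻¹) • F z := by
  have hne : ∀ w ∈ sphere (0 : ℂ) R, w ≠ z := fun w hw => ne_of_mem_of_not_mem hw hz
  have hinv : ContinuousOn (fun w => (w - z)⁻¹) (sphere 0 R) :=
    (continuousOn_id.sub continuousOn_const).inv₀ fun w hw => sub_ne_zero.2 (hne w hw)
  have hF' : CircleIntegrable (fun w => (w - z)⁻¹ • F w) 0 R := (hinv.smul hF).circleIntegrable hR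
  have hFz : CircleIntegrable (fun w => (w - z)⁻¹ • F z) 0 R :=
    (hinv.smul continuousOn_const).circleIntegrable hR
  rw [← circleIntegral.integral_smul_const, ← circleIntegral.integral_sub hF' hFz]
  refine circleIntegral.integral_congr hR fun w hw => ?_
  rw [dslope_of_ne _ (hne w hw), slope_def_module, smul_sub]

theorem eq_cauchyIntegral_sub_cauchyIntegral [CompleteSpace E] (hF : DifferentiableOn ℂ F {0}ᶜ)
    {z : ℂ} {r R : ℝ} (hr : 0 < r) (hrz : r < ‖z‖) (hzR : ‖z‖ < R) :
    F z = cauchyIntegral F R z - cauchyIntegral F r z := by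
  have hz : z ≠ 0 := norm_pos_iff.1 (hr.trans hrz)
  have hcont : ∀ s > 0, ContinuousOn F (sphere 0 s) := fun s hs =>
    hF.continuousOn.mono fun w hw => ne_of_mem_sphere hw hs.ne'
  have hD : DifferentiableOn ℂ (dslope F z) {0}ᶜ :=
    (differentiableOn_dslope (isOpen_compl_singleton.mem_nhds hz)).2 hF
  have hannulus : (∮ w in C(0, R), dslope F z w) = ∮ w in C(0, r), dslope F z w :=
    circleIntegral_eq_of_differentiable_on_annulus_off_countable hr (hrz.trans hzR).le
      countable_empty (hD.continuousOn.mono fun w hw h => hw.2 (h ▸ mem_ball_self hr))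
      fun w hw => hD.differentiableAt <| isOpen_compl_singleton.mem_nhds fun h =>
        hw.1.2 (h ▸ mem_closedBall_self hr.le)
  have hinner : (∮ w in C(0, r), (w - z)⁻¹) = 0 := by
    refine DiffContOnCl.circleIntegral_eq_zero hr.le (DifferentiableOn.diffContOnCl ?_)
    refine fun w hw => DifferentiableAt.differentiableWithinAt <|
      (differentiableAt_id.sub_const z).inv <| sub_ne_zero.2 ?_
    rintro rfl
    exact hrz.not_ge (by simpa using closure_ball_subset_closedBall hw)
  rw [circleIntegral_dslope (hr.trans (hrz.trans hzR)).le (by simpa using hzR.ne)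
    (hcont R (hr.trans (hrz.trans hzR))), circleIntegral_dslope hr.le (by simpa using hrz.ne')
    (hcont r hr), hinner, circleIntegral.integral_sub_inv_of_mem_ball (by simpa using hzR),
    zero_smul, sub_zero, sub_eq_iff_eq_add'] at hannulus
  rw [cauchyIntegral, cauchyIntegral, ← smul_sub, hannulus, add_sub_cancel_right,
    inv_smul_smul₀ two_pi_I_ne_zero]

theorem norm_cauchyIntegral_le {z : ℂ} {r C : ℝ} (hr : 0 ≤ r) (hrz : r + 1 ≤ ‖z‖)
    (hC : ∀ w ∈ sphere (0 : ℂ) r, ‖F w‖ ≤ C) : ‖cauchyIntegral F r z‖ ≤ r * C := by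
  refine circleIntegral.norm_two_pi_i_inv_smul_integral_le_of_norm_le_const hr fun w hw => ?_
  have h1 : 1 ≤ ‖w - z‖ := by
    have := norm_sub_norm_le z w
    rw [norm_sub_rev, mem_sphere_zero_iff_norm.1 hw] at this
    linarith
  rw [norm_smul, norm_inv]
  exact (mul_le_of_le_one_left (norm_nonneg _) (inv_le_one_of_one_le₀ h1)).trans (hC w hw)

theorem exists_differentiable_add_inv [CompleteSpace E] (hF : DifferentiableOn ℂ F {0}ᶜ) :
    ∃ P N : ℂ → E, Differentiable ℂ P ∧ Differentiable ℂ N ∧ ∀ z ≠ 0, F z = P z + N z⁻¹ := by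
  have hcont : ∀ s > 0, ContinuousOn F (sphere 0 s) := fun s hs =>
    hF.continuousOn.mono fun w hw => ne_of_mem_sphere hw hs.ne'
  let P : ℂ → E := fun z => cauchyIntegral F (‖z‖ + 1) z
  have hP : Differentiable ℂ P := fun z₀ => by
    have hpos : 0 < ‖z₀‖ + 1 := by positivity
    have hz₀ : ball (0 : ℂ) (‖z₀‖ + 1) ∈ 𝓝 z₀ := isOpen_ball.mem_nhds (by simp)
    refine ((differentiableOn_cauchyIntegral hpos (hcont _ hpos)).differentiableAt
      hz₀).congr_of_eventuallyEq ?_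
    filter_upwards [hz₀] with z hz
    have hz' : ‖z‖ < ‖z₀‖ + 1 := by simpa using hz
    rcases le_total (‖z‖ + 1) (‖z₀‖ + 1) with h | h
    · exact (cauchyIntegral_eq_cauchyIntegral hF (lt_add_one _) h).symm
    · exact cauchyIntegral_eq_cauchyIntegral hF hz' h
  obtain ⟨C, hC⟩ := (isCompact_sphere (0 : ℂ) 1).exists_bound_of_continuousOn (hcont 1 one_pos)
  have hO : (fun z => F z - P z) =O[cobounded ℂ] fun z => z ^ (0 : ℤ) := by
    refine IsBigO.of_bound C ?_
    filter_upwards [tendsto_norm_cobounded_atTop.eventually_ge_atTop 2] with z hz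
    rw [eq_cauchyIntegral_sub_cauchyIntegral hF one_pos (by linarith) (lt_add_one ‖z‖),
      sub_sub_cancel_left, norm_neg, zpow_zero, norm_one, mul_one]
    exact (norm_cauchyIntegral_le zero_le_one (by linarith) hC).trans_eq (one_mul C)
  obtain ⟨N, hN, hFN⟩ := exists_differentiable_eq_zpow_smul_inv (hF.sub hP.differentiableOn) hO
  refine ⟨P, N, hP, hN, fun z hz => ?_⟩
  rw [← sub_eq_iff_eq_add']
  simpa using hFN z hz

end Laurent

section LaurentSum

variable {E : Type*} [NormedAddCommGroup E] [NormedSpace ℂ E] {a b : ℤ → E} {z : ℂ} {s t : E}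

/-- The Laurent series `∑ j, z ^ j • a j` converges absolutely, with sum `s`. -/
structure HasLaurentSum (a : ℤ → E) (z : ℂ) (s : E) : Prop where
  summable_norm : Summable fun j => ‖z ^ j • a j‖
  hasSum : HasSum (fun j => z ^ j • a j) s

namespace HasLaurentSum

theorem of_summable_norm [CompleteSpace E] (h : Summable fun j => ‖z ^ j • a j‖) :
    HasLaurentSum a z (∑' j, z ^ j • a j) :=
  ⟨h, h.of_norm.hasSum⟩

theorem add (ha : HasLaurentSum a z s) (hb : HasLaurentSum b z t) :
    HasLaurentSum (a + b) z (s + t) where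
  summable_norm := (ha.summable_norm.add hb.summable_norm).of_nonneg_of_le
    (fun _ => norm_nonneg _) fun j => by
      rw [Pi.add_apply, smul_add]
      exact norm_add_le _ _
  hasSum := by simpa only [Pi.add_apply, smul_add] using ha.hasSum.add hb.hasSum

theorem neg (ha : HasLaurentSum a z s) : HasLaurentSum (-a) z (-s) where
  summable_norm := by simpa only [Pi.neg_apply, smul_neg, norm_neg] using ha.summable_norm
  hasSum := by simpa only [Pi.neg_apply, smul_neg] using ha.hasSum.neg

theorem sub (ha : HasLaurentSum a z s) (hb : HasLaurentSum b z t) :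
    HasLaurentSum (a - b) z (s - t) := by
  simpa only [sub_eq_add_neg] using ha.add hb.neg

theorem comp_neg (ha : HasLaurentSum a z⁻¹ s) : HasLaurentSum (fun j => a (-j)) z s where
  summable_norm := by
    simpa [comp_def] using (Equiv.neg ℤ).summable_iff.2 ha.summable_norm
  hasSum := by
    simpa [comp_def] using (Equiv.neg ℤ).hasSum_iff.2 ha.hasSum

theorem summable_norm_coeff (ha : HasLaurentSum a 1 s) : Summable fun j => ‖a j‖ := by
  simpa using ha.summable_norm

theorem norm_le (ha : HasLaurentSum a 1 s) : ‖s‖ ≤ ∑' j, ‖a j‖ := by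
  simpa [← ha.hasSum.tsum_eq] using norm_tsum_le_tsum_norm ha.summable_norm

end HasLaurentSum

theorem hasLaurentSum_indicator_coe (S : Finset ℤ) (a : ℤ → E) (z : ℂ) :
    HasLaurentSum ((S : Set ℤ).indicator a) z (∑ j ∈ S, z ^ j • a j) := by
  have hzero : ∀ j ∉ S, z ^ j • (S : Set ℤ).indicator a j = 0 := fun j hj => by
    rw [indicator_of_notMem (by simpa using hj), smul_zero]
  refine ⟨summable_of_ne_finset_zero fun j hj => by rw [hzero j hj, norm_zero], ?_⟩
  have hsum : ∑ j ∈ S, z ^ j • (S : Set ℤ).indicator a j = ∑ j ∈ S, z ^ j • a j :=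
    Finset.sum_congr rfl fun j hj => by rw [indicator_of_mem (Finset.mem_coe.2 hj)]
  exact hsum ▸ hasSum_sum_of_ne_finset_zero hzero

theorem hasLaurentSum_single (k : ℤ) (x : E) (z : ℂ) :
    HasLaurentSum (Pi.single k x) z (z ^ k • x) := by
  have hzero : ∀ j ≠ k, z ^ j • (Pi.single k x : ℤ → E) j = 0 := fun j hj => by
    rw [Pi.single_eq_of_ne hj, smul_zero]
  refine ⟨(hasSum_single k fun j hj => by rw [hzero j hj, norm_zero]).summable, ?_⟩
  simpa only [Pi.single_eq_same] using hasSum_single k hzero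

theorem norm_zpow_smul_le (ha : ∀ j, 0 ≤ j → a j = 0) (hz : 1 ≤ ‖z‖) (j : ℤ) :
    ‖z ^ j • a j‖ ≤ ‖a j‖ := by
  rcases le_or_gt 0 j with hj | hj
  · simp [ha j hj]
  · rw [norm_smul, norm_zpow]
    exact mul_le_of_le_one_left (norm_nonneg _) (zpow_le_one_of_nonpos₀ hz hj.le)

theorem isBigO_sum_zpow_smul (S : Finset ℤ) (a : ℤ → E) :
    ∃ N : ℤ, (fun z : ℂ => ∑ j ∈ S, z ^ j • a j) =O[cobounded ℂ] fun z => z ^ N := by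
  obtain ⟨N, hN⟩ := S.bddAbove
  refine ⟨N, .fun_sum fun j hj => ?_⟩
  simpa using! (isBigO_zpow_zpow_cobounded (hN hj)).smul (isBigO_const_one ℂ (a j) _)

variable [CompleteSpace E]

theorem exists_hasLaurentSum_of_differentiable {f : ℂ → E} (hf : Differentiable ℂ f) :
    ∃ a : ℤ → E, ∀ z, HasLaurentSum a z (f z) := by
  obtain ⟨p, hp⟩ : ∃ p, HasFPowerSeriesOnBall f p 0 ⊤ :=
    ⟨_, hf.hasFPowerSeriesOnBall 0 one_pos⟩
  let a : ℤ → E := extend (Nat.cast : ℕ → ℤ) p.coeff 0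
  have hzero : ∀ z : ℂ, ∀ j ∉ range (Nat.cast : ℕ → ℤ), z ^ j • a j = 0 := fun z j hj => by
    rw [show a j = 0 from extend_apply' _ _ _ hj, smul_zero]
  have hcoe : ∀ (z : ℂ) (n : ℕ), z ^ (n : ℤ) • a n = p n fun _ => z := fun z n => by
    rw [show a n = p.coeff n from Nat.cast_injective.extend_apply _ _ _, zpow_natCast,
      p.apply_eq_pow_smul_coeff]
  refine ⟨a, fun z => ⟨?_, ?_⟩⟩
  · have hsum : Summable fun n => ‖p n fun _ => z‖ :=
      p.summable_norm_apply (by simp [top_le_iff.1 hp.r_le])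
    refine (Nat.cast_injective.summable_iff fun j hj => by rw [hzero z j hj, norm_zero]).1 ?_
    simpa only [comp_def, hcoe] using hsum
  · refine (Nat.cast_injective.hasSum_iff (hzero z)).1 ?_
    simpa only [comp_def, hcoe, zero_add] using hp.hasSum (y := z) (by simp)

theorem exists_hasLaurentSum_of_differentiableOn {F : ℂ → E} (hF : DifferentiableOn ℂ F {0}ᶜ) :
    ∃ a : ℤ → E, ∀ z ≠ 0, HasLaurentSum a z (F z) := by
  obtain ⟨P, N, hP, hN, hF⟩ := exists_differentiable_add_inv hF
  obtain ⟨a, ha⟩ := exists_hasLaurentSum_of_differentiable hP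
  obtain ⟨b, hb⟩ := exists_hasLaurentSum_of_differentiable hN
  exact ⟨_, fun z hz => hF z hz ▸ (ha z).add (hb z⁻¹).comp_neg⟩

theorem exists_differentiable_eqOn_of_hasLaurentSum {F : ℂ → E} {c : ℤ → E} {r : ℝ}
    (hc : ∀ j < 0, c j = 0) (hF : ∀ z, r ≤ ‖z‖ → HasLaurentSum c z (F z)) :
    ∃ f : ℂ → E, Differentiable ℂ f ∧ ∀ z, r ≤ ‖z‖ → f z = F z := by
  refine ⟨fun z => ∑' j, z ^ j • c j, fun z => ?_, fun z hz => (hF z hz).hasSum.tsum_eq⟩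
  obtain ⟨R, hR⟩ := exists_gt (max r ‖z‖)
  have hR0 : 0 < R := (norm_nonneg z).trans_lt ((le_max_right _ _).trans_lt hR)
  have hnorm : ‖(R : ℂ)‖ = R := by simpa using hR0.le
  have hsum := (hF R (hnorm.symm ▸ (le_max_left _ _).trans hR.le)).summable_norm
  refine (differentiableOn_tsum_of_summable_norm hsum (fun j => ?_) isOpen_ball
    fun j w hw => ?_).differentiableAt (isOpen_ball.mem_nhds
      (mem_ball_zero_iff.2 ((le_max_right _ _).trans_lt hR)))
  · rcases lt_or_ge j 0 with hj | hj
    · simp [hc j hj]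
    · exact ((differentiableOn_zpow j _ (Or.inr hj)).smul_const (c j))
  · rcases lt_or_ge j 0 with hj | hj
    · simp [hc j hj]
    · lift j to ℕ using hj
      rw [norm_smul, norm_smul, norm_zpow, norm_zpow, hnorm, zpow_natCast, zpow_natCast]
      gcongr
      exact (mem_ball_zero_iff.1 hw).le

end LaurentSum

section Summable

variable {G E : Type*} [NormedAddCommGroup E] {a : G → E} {s : Set G}

theorem memℓp_one_iff_summable_norm : Memℓp a 1 ↔ Summable fun i => ‖a i‖ := by
  simpa using memℓp_gen_iff (p := 1) (f := a) (by simp)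

theorem lp_one_norm_eq_tsum (u : lp (fun _ : G => E) 1) : ‖u‖ = ∑' i, ‖u i‖ := by
  simpa using lp.norm_eq_tsum_rpow (p := 1) (by simp) u

theorem summable_norm_indicator (ha : Summable fun i => ‖a i‖) :
    Summable fun i => ‖s.indicator a i‖ := by
  simpa only [norm_indicator_eq_indicator_norm] using ha.indicator s

theorem tsum_norm_indicator_le (ha : Summable fun i => ‖a i‖) :
    ∑' i, ‖s.indicator a i‖ ≤ ∑' i, ‖a i‖ :=
  (summable_norm_indicator ha).tsum_le_tsum (fun _ => norm_indicator_le_norm_self _ _) ha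

theorem exists_finset_mul_tsum_norm_indicator_lt (a : G → E) (C : ℝ) {ε : ℝ} (hε : 0 < ε) :
    ∃ S : Finset G, C * ∑' j, ‖(S : Set G)ᶜ.indicator a j‖ < ε := by
  have htail := (tendsto_tsum_compl_atTop_zero fun j => ‖a j‖).const_mul C
  rw [mul_zero] at htail
  obtain ⟨S, hS⟩ := (htail.eventually_lt_const hε).exists
  refine ⟨S, ?_⟩
  simpa only [norm_indicator_eq_indicator_norm, ← tsum_subtype] using! hS

end Summable

local notation:67 a:68 "⋆" b:67 => addConvolution (LinearMap.mul ℤ _) a b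

section Wiener

variable {G 𝔸 : Type*} [AddMonoid G] [NormedRing 𝔸] {a b h : G → 𝔸} {s : Set G}

/-- The pairs in `G × G` sorted by their sum. Summing over the left-hand side groups a double series
the way the convolution does. -/
def sigmaAddFiberEquiv (G : Type*) [AddMonoid G] : (Σ m : G, addFiber m) ≃ G × G :=
  Set.sigmaEquiv _ fun p => ⟨p.1 + p.2, mem_addFiber.2 rfl, fun _ hm => (mem_addFiber.1 hm).symm⟩

theorem summable_norm_mul_addFiber (ha : Summable fun i => ‖a i‖) (hb : Summable fun i => ‖b i‖) :
    Summable fun p : Σ m : G, addFiber m => ‖a p.2.1.1 * b p.2.1.2‖ :=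
  ((sigmaAddFiberEquiv G).summable_iff.2 (ha.mul_norm hb) :)

theorem norm_addConvolution_le (ha : Summable fun i => ‖a i‖) (hb : Summable fun i => ‖b i‖)
    (m : G) : ‖(a ⋆ b) m‖ ≤ ∑' p : addFiber m, ‖a p.1.1 * b p.1.2‖ :=
  norm_tsum_le_tsum_norm ((summable_norm_mul_addFiber ha hb).sigma_factor m)

theorem summable_norm_addConvolution (ha : Summable fun i => ‖a i‖)
    (hb : Summable fun i => ‖b i‖) : Summable fun m => ‖(a ⋆ b) m‖ :=
  (summable_norm_mul_addFiber ha hb).sigma.of_nonneg_of_le (fun _ => norm_nonneg _)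
    (norm_addConvolution_le ha hb)

theorem tsum_norm_addConvolution_le (ha : Summable fun i => ‖a i‖)
    (hb : Summable fun i => ‖b i‖) :
    ∑' m, ‖(a ⋆ b) m‖ ≤ (∑' i, ‖a i‖) * ∑' i, ‖b i‖ := by
  have hab := summable_norm_mul_addFiber ha hb
  calc ∑' m, ‖(a ⋆ b) m‖ ≤ ∑' m, ∑' p : addFiber m, ‖a p.1.1 * b p.1.2‖ :=
        (summable_norm_addConvolution ha hb).tsum_le_tsum (norm_addConvolution_le ha hb) hab.sigma
    _ = ∑' p : G × G, ‖a p.1 * b p.2‖ := by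
        rw [← hab.tsum_sigma]
        exact (sigmaAddFiberEquiv G).tsum_eq fun p : G × G => ‖a p.1 * b p.2‖
    _ ≤ ∑' p : G × G, ‖a p.1‖ * ‖b p.2‖ :=
        (ha.mul_norm hb).tsum_le_tsum (fun p => norm_mul_le _ _)
          (ha.mul_of_nonneg hb (fun _ => norm_nonneg _) fun _ => norm_nonneg _)
    _ = (∑' i, ‖a i‖) * ∑' i, ‖b i‖ :=
        (tsum_mul_tsum_of_summable_norm (f := fun i => ‖a i‖) (g := fun i => ‖b i‖)
          (by simpa using ha) (by simpa using hb)).symm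

/-- The affine Toeplitz operator `u ↦ 1_s (h + h ⋆ u)` on `ℓ¹`. For `s` the negative integers its
fixed point solves the Wiener–Hopf equation: `(1 - h) ⋆ (1 + u)` has no coefficients in `s`. -/
def toeplitzMap (s : Set G) (hh : Summable fun i => ‖h i‖) (u : lp (fun _ : G => 𝔸) 1) :
    lp (fun _ : G => 𝔸) 1 :=
  ⟨s.indicator (h + h ⋆ ⇑u), memℓp_one_iff_summable_norm.2 <| summable_norm_indicator <|
    (hh.add (summable_norm_addConvolution hh
      (memℓp_one_iff_summable_norm.1 u.2))).of_nonneg_of_le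
      (fun _ => norm_nonneg _) fun _ => norm_add_le _ _⟩

theorem norm_toeplitzMap_le (hh : Summable fun i => ‖h i‖) (u : lp (fun _ : G => 𝔸) 1) :
    ‖toeplitzMap s hh u‖ ≤ (∑' i, ‖h i‖) * (1 + ‖u‖) := by
  have hu := memℓp_one_iff_summable_norm.1 u.2
  have hhu := summable_norm_addConvolution hh hu
  have hsum : Summable fun i => ‖(h + h ⋆ ⇑u) i‖ :=
    (hh.add hhu).of_nonneg_of_le (fun _ => norm_nonneg _) fun _ => norm_add_le _ _
  calc ‖toeplitzMap s hh u‖ = ∑' i, ‖s.indicator (h + h ⋆ ⇑u) i‖ := by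
        rw [lp_one_norm_eq_tsum, toeplitzMap]
    _ ≤ ∑' i, ‖(h + h ⋆ ⇑u) i‖ := tsum_norm_indicator_le hsum
    _ ≤ ∑' i, (‖h i‖ + ‖(h ⋆ ⇑u) i‖) := hsum.tsum_le_tsum (fun _ => norm_add_le _ _) (hh.add hhu)
    _ = (∑' i, ‖h i‖) + ∑' i, ‖(h ⋆ ⇑u) i‖ := hh.tsum_add hhu
    _ ≤ (∑' i, ‖h i‖) * (1 + ‖u‖) := by
        rw [mul_one_add, lp_one_norm_eq_tsum]
        gcongr
        exact tsum_norm_addConvolution_le hh hu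

variable [CompleteSpace 𝔸]

theorem addConvolutionExists_of_summable_norm (ha : Summable fun i => ‖a i‖)
    (hb : Summable fun i => ‖b i‖) : AddConvolutionExists (LinearMap.mul ℤ 𝔸) a b :=
  fun m => (summable_norm_mul_addFiber ha hb).of_norm.sigma_factor m

theorem tsum_addConvolution (ha : Summable fun i => ‖a i‖) (hb : Summable fun i => ‖b i‖) :
    ∑' m, (a ⋆ b) m = (∑' i, a i) * ∑' i, b i := by
  rw [tsum_mul_tsum_of_summable_norm ha hb, ← (sigmaAddFiberEquiv G).tsum_eq]
  exact ((summable_norm_mul_addFiber ha hb).of_norm.tsum_sigma).symm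

theorem norm_toeplitzMap_sub_le (hh : Summable fun i => ‖h i‖) (u u' : lp (fun _ : G => 𝔸) 1) :
    ‖toeplitzMap s hh u - toeplitzMap s hh u'‖ ≤ (∑' i, ‖h i‖) * ‖u - u'‖ := by
  have hu' := memℓp_one_iff_summable_norm.1 u'.2
  have hsub := memℓp_one_iff_summable_norm.1 (u - u').2
  have heq : ⇑(toeplitzMap s hh u - toeplitzMap s hh u') = s.indicator (h ⋆ ⇑(u - u')) := by
    have hadd : h ⋆ ⇑u = h ⋆ ⇑(u - u') + h ⋆ ⇑u' := by
      rw [← (addConvolutionExists_of_summable_norm hh hsub).distrib_add _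
        (addConvolutionExists_of_summable_norm hh hu'), lp.coeFn_sub, sub_add_cancel]
    rw [lp.coeFn_sub, toeplitzMap, toeplitzMap, ← indicator_sub', hadd, add_sub_add_left_eq_sub,
      add_sub_cancel_right]
  calc ‖toeplitzMap s hh u - toeplitzMap s hh u'‖ = ∑' i, ‖s.indicator (h ⋆ ⇑(u - u')) i‖ := by
        rw [lp_one_norm_eq_tsum, heq]
    _ ≤ ∑' i, ‖(h ⋆ ⇑(u - u')) i‖ :=
        tsum_norm_indicator_le (summable_norm_addConvolution hh hsub)
    _ ≤ (∑' i, ‖h i‖) * ∑' i, ‖(u - u') i‖ := tsum_norm_addConvolution_le hh hsub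
    _ = (∑' i, ‖h i‖) * ‖u - u'‖ := by rw [lp_one_norm_eq_tsum]

theorem exists_eq_indicator_add_addConvolution (s : Set G) (hh : Summable fun i => ‖h i‖)
    (hlt : ∑' i, ‖h i‖ < 1) :
    ∃ u : G → 𝔸, (Summable fun i => ‖u i‖) ∧ u = s.indicator (h + h ⋆ u) ∧
      ∑' i, ‖u i‖ ≤ (∑' i, ‖h i‖) * (1 + ∑' i, ‖u i‖) := by
  have hcontr : ContractingWith ⟨∑' i, ‖h i‖, tsum_nonneg fun _ => norm_nonneg _⟩
      (toeplitzMap s hh) :=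
    ⟨hlt, LipschitzWith.of_dist_le_mul fun u u' => by
      simpa only [dist_eq_norm] using! norm_toeplitzMap_sub_le hh u u'⟩
  refine ⟨_, memℓp_one_iff_summable_norm.1 hcontr.fixedPoint.2,
    congrArg (⇑) hcontr.fixedPoint_isFixedPt.symm, ?_⟩
  have hle := norm_toeplitzMap_le (s := s) hh (hcontr.fixedPoint _)
  rwa [hcontr.fixedPoint_isFixedPt, lp_one_norm_eq_tsum] at hle

end Wiener

section WienerHopf

variable {𝔸 : Type*} [NormedRing 𝔸] [NormedAlgebra ℂ 𝔸]

theorem zpow_smul_addConvolution {z : ℂ} (hz : z ≠ 0) (a b : ℤ → 𝔸) :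
    (fun j => z ^ j • (a ⋆ b) j) = (fun j => z ^ j • a j) ⋆ fun j => z ^ j • b j := by
  ext m
  simp only [addConvolution, ← tsum_const_smul'']
  refine tsum_congr fun p => ?_
  simp only [LinearMap.mul_apply', smul_mul_smul_comm, ← zpow_add₀ hz, mem_addFiber.1 p.2]

variable [CompleteSpace 𝔸]

theorem HasLaurentSum.mul {a b : ℤ → 𝔸} {z : ℂ} {s t : 𝔸} (hz : z ≠ 0)
    (ha : HasLaurentSum a z s) (hb : HasLaurentSum b z t) :
    HasLaurentSum (a ⋆ b) z (s * t) := by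
  have hconv := zpow_smul_addConvolution hz a b
  have hsum : Summable fun j => ‖z ^ j • (a ⋆ b) j‖ := by
    simpa only [← hconv] using summable_norm_addConvolution ha.summable_norm hb.summable_norm
  have heq : ∑' j, z ^ j • (a ⋆ b) j = s * t := by
    rw [hconv, tsum_addConvolution ha.summable_norm hb.summable_norm, ha.hasSum.tsum_eq,
      hb.hasSum.tsum_eq]
  exact heq ▸ .of_summable_norm hsum

theorem exists_differentiable_eq_one_sub_mul {h : ℤ → 𝔸} {H : ℂ → 𝔸}
    (hH : ∀ z ≠ 0, HasLaurentSum h z (H z)) (hlt : ∑' j, ‖h j‖ < 1 / 2) :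
    ∃ F V : ℂ → 𝔸, Differentiable ℂ F ∧ V =O[cobounded ℂ] (fun _ => (1 : ℂ)) ∧ IsUnit (F 1) ∧
      ∀ z, 1 ≤ ‖z‖ → F z = (1 - H z) * V z := by
  have hh : Summable fun j => ‖h j‖ := (hH 1 one_ne_zero).summable_norm_coeff
  obtain ⟨u, hu, hfix, hle⟩ :=
    exists_eq_indicator_add_addConvolution (Iio 0) hh (hlt.trans one_half_lt_one)
  have hu0 : ∀ j, 0 ≤ j → u j = 0 := fun j hj => by
    rw [hfix, indicator_of_notMem (by simpa using hj)]
  have hu_lt : ∑' j, ‖u j‖ < 1 := by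
    have hu_nonneg : 0 ≤ ∑' j, ‖u j‖ := tsum_nonneg fun j => norm_nonneg _
    nlinarith
  let U : ℂ → 𝔸 := fun z => ∑' j, z ^ j • u j
  have hU : ∀ z : ℂ, 1 ≤ ‖z‖ → HasLaurentSum u z (U z) := fun z hz =>
    .of_summable_norm (hu.of_nonneg_of_le (fun _ => norm_nonneg _) (norm_zpow_smul_le hu0 hz))
  have hne : ∀ z : ℂ, 1 ≤ ‖z‖ → z ≠ 0 := fun z hz => norm_pos_iff.1 (one_pos.trans_le hz)
  have hc : ∀ j < (0 : ℤ), ((Pi.single 0 1 : ℤ → 𝔸) - h + (u - h ⋆ u)) j = 0 := fun j hj => by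
    have : u j = h j + (h ⋆ u) j := by
      conv_lhs => rw [hfix, indicator_of_mem (by exact hj), Pi.add_apply]
    simp [this, hj.ne]
  obtain ⟨F, hF, hFU⟩ := exists_differentiable_eqOn_of_hasLaurentSum hc fun z hz =>
    (((hasLaurentSum_single 0 1 z).sub (hH z (hne z hz))).add
      ((hU z hz).sub ((hH z (hne z hz)).mul (hne z hz) (hU z hz))))
  have hFeq : ∀ z, 1 ≤ ‖z‖ → F z = (1 - H z) * (1 + U z) := fun z hz => by
    rw [hFU z hz, zpow_zero, one_smul]
    noncomm_ring
  refine ⟨F, fun z => 1 + U z, hF, ?_, ?_, hFeq⟩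
  · refine (isBigO_const_one ℂ 1 _).add (IsBigO.of_bound (∑' j, ‖u j‖) ?_)
    filter_upwards [tendsto_norm_cobounded_atTop.eventually_ge_atTop 1] with z hz
    rw [norm_one, mul_one]
    exact (norm_tsum_le_tsum_norm (hU z hz).summable_norm).trans
      ((hU z hz).summable_norm.tsum_le_tsum (norm_zpow_smul_le hu0 hz) hu)
  · have hH1 : ‖H 1‖ < 1 := (hH 1 one_ne_zero).norm_le.trans_lt (hlt.trans one_half_lt_one)
    have hU1 : ‖-U 1‖ < 1 := by
      rw [norm_neg]
      exact (hU 1 (by simp)).norm_le.trans_lt hu_lt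
    rw [hFeq 1 (by simp), ← sub_neg_eq_add 1 (U 1)]
    exact (isUnit_one_sub_of_norm_lt_one hH1).mul (isUnit_one_sub_of_norm_lt_one hU1)

theorem differentiableOn_units_inv {g : ℂ → 𝔸ˣ} {s : Set ℂ}
    (hg : DifferentiableOn ℂ (fun z => (g z : 𝔸)) s) :
    DifferentiableOn ℂ (fun z => (↑(g z)⁻¹ : 𝔸)) s := by
  simpa only [comp_def, Ring.inverse_unit] using!
    fun z hz => (differentiableAt_inverse (g z).isUnit).comp_differentiableWithinAt z (hg z hz)

theorem exists_differentiable_eq_zpow_smul_units_mul {g : ℂ → 𝔸ˣ}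
    (hg : DifferentiableOn ℂ (fun z => (g z : 𝔸)) {0}ᶜ) :
    ∃ (N : ℤ) (F E : ℂ → 𝔸), Differentiable ℂ F ∧ Differentiable ℂ E ∧ IsUnit (F 1) ∧
      ∀ z ≠ 0, F z = z ^ N • (g z * E z⁻¹) := by
  have hg' := differentiableOn_units_inv hg
  obtain ⟨a, ha⟩ := exists_hasLaurentSum_of_differentiableOn hg
  obtain ⟨q, hq⟩ := exists_hasLaurentSum_of_differentiableOn hg'
  have ha1 := (ha 1 one_ne_zero).summable_norm_coeff
  have hq1 := (hq 1 one_ne_zero).summable_norm_coeff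
  obtain ⟨S, hS⟩ := exists_finset_mul_tsum_norm_indicator_lt q (∑' j, ‖a j‖) one_half_pos
  let r : ℂ → 𝔸 := fun z => ∑ j ∈ S, z ^ j • q j
  have hH : ∀ z ≠ (0 : ℂ), HasLaurentSum (a ⋆ (S : Set ℤ)ᶜ.indicator q) z
      (g z * (↑(g z)⁻¹ - r z)) := fun z hz => by
    have htail := (hq z hz).sub (hasLaurentSum_indicator_coe S q z)
    rw [← indicator_compl] at htail
    exact (ha z hz).mul hz htail
  have hlt := (tsum_norm_addConvolution_le ha1 (summable_norm_indicator hq1)).trans_lt hS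
  obtain ⟨F, V, hF, hV, hF1, hFV⟩ := exists_differentiable_eq_one_sub_mul hH hlt
  obtain ⟨N, hN⟩ := isBigO_sum_zpow_smul S q
  have hO : (fun z => ↑(g z)⁻¹ * F z) =O[cobounded ℂ] fun z => z ^ N := by
    have hgF : ∀ z, 1 ≤ ‖z‖ → ↑(g z)⁻¹ * F z = r z * V z := fun z hz => by
      rw [hFV z hz, mul_sub, Units.mul_inv, sub_sub_cancel, mul_assoc, Units.inv_mul_cancel_left]
    refine IsBigO.trans (EventuallyEq.isBigO ?_) ((hN.mul hV).congr_right ?_)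
    · filter_upwards [tendsto_norm_cobounded_atTop.eventually_ge_atTop 1] with z hz
      exact hgF z hz
    · simp
  obtain ⟨E, hE, hFE⟩ := exists_differentiable_eq_zpow_smul_inv
    (hg'.fun_mul hF.differentiableOn) hO
  exact ⟨N, F, E, hF, hE, hF1, fun z hz => by
    rw [← mul_smul_comm, ← hFE z hz, Units.mul_inv_cancel_left]⟩

end WienerHopf

section MatrixDifferentiable

variable {m n : Type*} [Finite m] {s : Set ℂ}

theorem differentiableOn_matrix_iff [Finite n] {F : ℂ → Matrix m n ℂ} :
    DifferentiableOn ℂ F s ↔ ∀ i j, DifferentiableOn ℂ (fun z => F z i j) s := by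
  cases nonempty_fintype m
  cases nonempty_fintype n
  exact (differentiableOn_pi (F' := fun _ : m => n → ℂ)).trans
    (forall_congr' fun _ => differentiableOn_pi)

theorem differentiable_matrix_iff [Finite n] {F : ℂ → Matrix m n ℂ} :
    Differentiable ℂ F ↔ ∀ i j, Differentiable ℂ fun z => F z i j := by
  simp only [← differentiableOn_univ, differentiableOn_matrix_iff]

theorem differentiable_matrix_iff_col [Finite n] {F : ℂ → Matrix m n ℂ} :
    Differentiable ℂ F ↔ ∀ j, Differentiable ℂ fun z => (F z).col j := by
  cases nonempty_fintype m
  simp only [differentiable_matrix_iff, differentiable_pi, Matrix.col_apply]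
  exact forall_comm

theorem differentiableOn_mulVec [Fintype n] {F : ℂ → Matrix m n ℂ} {f : ℂ → n → ℂ}
    (hF : DifferentiableOn ℂ F s) (hf : DifferentiableOn ℂ f s) :
    DifferentiableOn ℂ (fun z => F z *ᵥ f z) s := by
  cases nonempty_fintype m
  exact differentiableOn_pi.2 fun i => .fun_sum fun j _ =>
    (differentiableOn_matrix_iff.1 hF i j).mul (differentiableOn_pi.1 hf j)

open scoped Matrix.Norms.Operator in
theorem differentiable_matrix_inv [Fintype n] [DecidableEq n] {F : ℂ → Matrix n n ℂ}
    (hF : Differentiable ℂ F) (hu : ∀ z, IsUnit (F z)) : Differentiable ℂ fun z => (F z)⁻¹ := by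
  simp only [Matrix.nonsing_inv_eq_ringInverse]
  exact fun z => (differentiableAt_inverse (hu z)).comp z (hF z)

end MatrixDifferentiable

theorem col_updateCol {m n R : Type*} [DecidableEq n] (M : Matrix m n R) (j : n) (v : m → R) :
    (M.updateCol j v).col = update M.col j v := by
  ext k i
  rcases eq_or_ne k j with rfl | hj
  · simp only [Matrix.col_apply, Matrix.updateCol_self, update_self]
  · simp only [Matrix.col_apply, Matrix.updateCol_ne hj, update_of_ne hj]

section Sections

open scoped Matrix.Norms.Operator MatrixGroups

variable {ι : Type*} [Fintype ι] [DecidableEq ι] {g : ℂ → GL ι ℂ} {d k : ℤ} {f e : ℂ → ι → ℂ}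

/-- A global section of the twist by `d` of the bundle over the projective line with transition
matrix `g`: its representatives `f` and `e` in the charts around `0` and `∞` are entire and agree on
the overlap. -/
structure IsSection (g : ℂ → GL ι ℂ) (d : ℤ) (f e : ℂ → ι → ℂ) : Prop where
  differentiable_zero : Differentiable ℂ f
  differentiable_infty : Differentiable ℂ e
  eq_smul_mulVec : ∀ z ≠ 0, f z = z ^ d • (g z).1 *ᵥ e z⁻¹

namespace IsSection

theorem inv_mulVec_eq (h : IsSection g d f e) {z : ℂ} (hz : z ≠ 0) :
    (↑(g z)⁻¹ : Matrix ι ι ℂ) *ᵥ f z = z ^ d • e z⁻¹ := by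
  rw [h.eq_smul_mulVec z hz, ← Matrix.mulVec_smul, Matrix.mulVec_mulVec, Units.inv_mul,
    Matrix.one_mulVec]

theorem swap (h : IsSection g d f e) : IsSection (fun w => (g w⁻¹)⁻¹) d e f where
  differentiable_zero := h.differentiable_infty
  differentiable_infty := h.differentiable_zero
  eq_smul_mulVec w hw := by
    rw [h.inv_mulVec_eq (inv_ne_zero hw), inv_inv, inv_zpow, smul_inv_smul₀ (zpow_ne_zero d hw)]

theorem isBigO (h : IsSection g d f e) :
    (fun z => (↑(g z)⁻¹ : Matrix ι ι ℂ) *ᵥ f z) =O[cobounded ℂ] fun z => z ^ d := by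
  have he := isBigO_comp_inv_cobounded h.differentiable_infty.continuous.continuousAt
  refine IsBigO.trans (EventuallyEq.isBigO ?_) <|
    ((isBigO_refl (fun z : ℂ => z ^ d) (cobounded ℂ)).smul he).congr_right fun z => by simp
  filter_upwards [eventually_ne_cobounded 0] with z hz
  exact h.inv_mulVec_eq hz

end IsSection

theorem exists_isSection (hg : DifferentiableOn ℂ (fun z => (g z).1) {0}ᶜ)
    (hf : Differentiable ℂ f)
    (hO : (fun z => (↑(g z)⁻¹ : Matrix ι ι ℂ) *ᵥ f z) =O[cobounded ℂ] fun z => z ^ d) :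
    ∃ e, IsSection g d f e := by
  obtain ⟨e, he, hfe⟩ := exists_differentiable_eq_zpow_smul_inv
    (differentiableOn_mulVec (differentiableOn_units_inv hg) hf.differentiableOn) hO
  refine ⟨e, hf, he, fun z hz => ?_⟩
  rw [← Matrix.mulVec_smul, ← hfe z hz, Matrix.mulVec_mulVec, Units.mul_inv, Matrix.one_mulVec]

theorem IsSection.exists_isSection_dslope (h : IsSection g d f e)
    (hg : DifferentiableOn ℂ (fun z => (g z).1) {0}ᶜ) {z₀ : ℂ} (hz₀ : f z₀ = 0) :
    ∃ e', IsSection g (d - 1) (dslope f z₀) e' := by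
  refine exists_isSection hg (differentiableOn_univ.1 <|
    (differentiableOn_dslope univ_mem).2 h.differentiable_zero.differentiableOn) <|
    IsBigO.trans (EventuallyEq.isBigO ?_) (isBigO_sub_inv_smul_cobounded z₀ h.isBigO)
  filter_upwards [eventually_ne_cobounded z₀] with z hz
  rw [dslope_of_ne _ hz, slope_def_module, hz₀, sub_zero, Matrix.mulVec_smul]

/-- The transition matrix of the dual bundle, for which the dot product is the duality pairing. -/
def contragredient (M : GL ι ℂ) : GL ι ℂ where
  val := (↑M⁻¹ : Matrix ι ι ℂ)ᵀ
  inv := M.1ᵀ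
  val_inv := by rw [← Matrix.transpose_mul, Units.mul_inv, Matrix.transpose_one]
  inv_val := by rw [← Matrix.transpose_mul, Units.inv_mul, Matrix.transpose_one]

theorem contragredient_mulVec_dotProduct_mulVec (M : GL ι ℂ) (v w : ι → ℂ) :
    ((contragredient M).1 *ᵥ v) ⬝ᵥ (M.1 *ᵥ w) = v ⬝ᵥ w := by
  rw [contragredient, Matrix.mulVec_transpose, ← Matrix.dotProduct_mulVec, Matrix.mulVec_mulVec,
    Units.inv_mul, Matrix.one_mulVec]

theorem IsSection.dotProduct_eq_zero {f' e' : ℂ → ι → ℂ} (h : IsSection g d f e)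
    (h' : IsSection (fun z => contragredient (g z)) k f' e') (hkd : k + d < 0) (z : ℂ) :
    f' z ⬝ᵥ f z = 0 := by
  have hdiff : ∀ {u v : ℂ → ι → ℂ}, Differentiable ℂ u → Differentiable ℂ v →
      Differentiable ℂ fun z => u z ⬝ᵥ v z := fun hu hv =>
    .fun_sum fun i _ => (differentiable_pi.1 hu i).mul (differentiable_pi.1 hv i)
  have hO : (fun z => f' z ⬝ᵥ f z) =O[cobounded ℂ] fun z => z⁻¹ := by
    have he := isBigO_comp_inv_cobounded
      (hdiff h'.differentiable_infty h.differentiable_infty).continuous.continuousAt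
    refine IsBigO.trans (EventuallyEq.isBigO ?_) <|
      ((isBigO_zpow_zpow_cobounded (Int.le_sub_one_of_lt hkd)).smul he).congr_right
        fun z => by simp
    filter_upwards [eventually_ne_cobounded 0] with z hz
    rw [h'.eq_smul_mulVec z hz, h.eq_smul_mulVec z hz, smul_dotProduct, dotProduct_smul,
      contragredient_mulVec_dotProduct_mulVec, smul_smul, zpow_add₀ hz]
  refine (hdiff h'.differentiable_zero h.differentiable_zero).apply_eq_of_tendsto_cocompact z ?_
  rw [← Metric.cobounded_eq_cocompact]
  exact hO.trans_tendsto tendsto_inv₀_cobounded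

end Sections

section Frames

open scoped Matrix.Norms.Operator MatrixGroups

variable {ι : Type*} [Fintype ι] [DecidableEq ι] {g : ℂ → GL ι ℂ} {d : ι → ℤ}
  {F E : ℂ → Matrix ι ι ℂ}

/-- A family of sections of twists of the bundle, written as the columns of matrices `F` and `E` in
the two charts, that trivialises the bundle at the point `1`. The twists `d` are its degrees. -/
structure IsFrame (g : ℂ → GL ι ℂ) (d : ι → ℤ) (F E : ℂ → Matrix ι ι ℂ) : Prop where
  isSection : ∀ j, IsSection g (d j) (fun z => (F z).col j) fun w => (E w).col j
  isUnit_one : IsUnit (F 1)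

/-- A frame of least total degree; it turns out to trivialise the bundle everywhere. -/
structure IsMinimalFrame (g : ℂ → GL ι ℂ) (d : ι → ℤ) (F E : ℂ → Matrix ι ι ℂ) : Prop
    extends IsFrame g d F E where
  sum_le_sum : ∀ d' F' E', IsFrame g d' F' E' → ∑ j, d j ≤ ∑ j, d' j

namespace IsFrame

theorem differentiable_zero (h : IsFrame g d F E) : Differentiable ℂ F :=
  differentiable_matrix_iff_col.2 fun j => (h.isSection j).differentiable_zero

theorem mul_diagonal_eq (h : IsFrame g d F E) {z : ℂ} (hz : z ≠ 0) :
    F z * Matrix.diagonal (fun j => z ^ (-d j)) = g z * E z⁻¹ := by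
  ext i j
  have hj := congrFun ((h.isSection j).eq_smul_mulVec z hz) i
  rw [Matrix.col_apply, Pi.smul_apply, smul_eq_mul] at hj
  rw [Matrix.mul_diagonal, hj, mul_right_comm, ← zpow_add₀ hz, add_neg_cancel, zpow_zero, one_mul]
  rfl

theorem swap (h : IsFrame g d F E) : IsFrame (fun w => (g w⁻¹)⁻¹) d E F where
  isSection j := (h.isSection j).swap
  isUnit_one := by
    have hE := h.mul_diagonal_eq one_ne_zero
    simp only [one_zpow, Matrix.diagonal_one, mul_one, inv_one] at hE
    exact (IsUnit.mul_iff.1 (hE ▸ h.isUnit_one)).2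

theorem update (h : IsFrame g d F E) (m : ι) {k : ℤ} {f e : ℂ → ι → ℂ} (hfe : IsSection g k f e)
    {c : ι → ℂ} (hc : c m ≠ 0) {t : ℂ} (ht : F 1 *ᵥ c = t • f 1) :
    IsFrame g (update d m k) (fun z => (F z).updateCol m (f z))
      fun w => (E w).updateCol m (e w) where
  isSection j := by
    rcases eq_or_ne j m with rfl | hj
    · simpa only [col_updateCol, update_self] using hfe
    · simpa only [col_updateCol, update_of_ne hj] using h.isSection j
  isUnit_one := by
    have hdet : t * ((F 1).updateCol m (f 1)).det = (F 1).det * c m := by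
      rw [← Matrix.det_updateCol_smul, ← ht, ← Matrix.cramer_apply,
        Matrix.cramer_eq_adjugate_mulVec, Matrix.mulVec_mulVec, Matrix.adjugate_mul,
        Matrix.smul_mulVec, Matrix.one_mulVec, Pi.smul_apply, smul_eq_mul]
    rw [Matrix.isUnit_iff_isUnit_det, isUnit_iff_ne_zero]
    have hF := ((Matrix.isUnit_iff_isUnit_det _).1 h.isUnit_one).ne_zero
    exact right_ne_zero_of_mul (hdet ▸ mul_ne_zero hF hc)

theorem exists_isSection_mulVec (h : IsFrame g d F E)
    (hg : DifferentiableOn ℂ (fun z => (g z).1) {0}ᶜ) {c : ι → ℂ} {k : ℤ}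
    (hk : ∀ j, c j ≠ 0 → d j ≤ k) : ∃ e, IsSection g k (fun z => F z *ᵥ c) e := by
  have hsum : ∀ z, F z *ᵥ c = ∑ j, c j • (F z).col j := fun z => by
    simpa only [op_smul_eq_smul, Matrix.col] using Matrix.mulVec_eq_sum c (F z)
  refine exists_isSection hg (differentiableOn_univ.1 <| differentiableOn_mulVec
    h.differentiable_zero.differentiableOn (differentiableOn_const c)) ?_
  simp only [hsum, Matrix.mulVec_sum, Matrix.mulVec_smul]
  refine .fun_sum fun j _ => ?_
  by_cases hj : c j = 0
  · simpa only [hj, zero_smul] using isBigO_zero _ _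
  · exact ((h.isSection j).isBigO.const_smul_left (c j)).trans
      (isBigO_zpow_zpow_cobounded (hk j hj))

end IsFrame

theorem exists_isFrame (hg : DifferentiableOn ℂ (fun z => (g z).1) {0}ᶜ) :
    ∃ (N : ℤ) (F E : ℂ → Matrix ι ι ℂ), IsFrame g (fun _ => N) F E := by
  obtain ⟨N, F, E, hF, hE, hF1, hFE⟩ := exists_differentiable_eq_zpow_smul_units_mul hg
  refine ⟨N, F, E, fun j => ⟨differentiable_matrix_iff_col.1 hF j,
    differentiable_matrix_iff_col.1 hE j, fun z hz => ?_⟩, hF1⟩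
  rw [hFE z hz]
  rfl

theorem exists_le_sum_of_isFrame (hg : DifferentiableOn ℂ (fun z => (g z).1) {0}ᶜ) :
    ∃ b : ℤ, ∀ d F E, IsFrame g d F E → b ≤ ∑ j, d j := by
  have hdual : DifferentiableOn ℂ (fun z => (contragredient (g z)).1) {0}ᶜ :=
    differentiableOn_matrix_iff.2 fun i j =>
      differentiableOn_matrix_iff.1 (differentiableOn_units_inv hg) j i
  obtain ⟨N, F', E', h'⟩ := exists_isFrame hdual
  refine ⟨∑ _, -N, fun d F E h => Finset.sum_le_sum fun j _ => ?_⟩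
  by_contra! hlt
  have hpair : (F' 1)ᵀ *ᵥ (F 1).col j = 0 := funext fun i =>
    (h.isSection j).dotProduct_eq_zero (h'.isSection i) (by lia) 1
  have hdet : ∀ M : Matrix ι ι ℂ, IsUnit M → M.det ≠ 0 := fun M hM =>
    ((Matrix.isUnit_iff_isUnit_det M).1 hM).ne_zero
  exact hdet _ h.isUnit_one <| Matrix.det_eq_zero_of_column_eq_zero j <| congrFun <|
    Matrix.eq_zero_of_mulVec_eq_zero (by simpa using hdet _ h'.isUnit_one) hpair

theorem exists_isMinimalFrame (hg : DifferentiableOn ℂ (fun z => (g z).1) {0}ᶜ) :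
    ∃ d F E, IsMinimalFrame g d F E := by
  obtain ⟨b, hb⟩ := exists_le_sum_of_isFrame hg
  obtain ⟨N, F, E, h⟩ := exists_isFrame hg
  obtain ⟨s, ⟨d, F, E, h, rfl⟩, hmin⟩ := Int.exists_least_of_bdd
    (P := fun s => ∃ d F E, IsFrame g d F E ∧ ∑ j, d j = s)
    ⟨b, by rintro _ ⟨d, F, E, h, rfl⟩; exact hb d F E h⟩ ⟨_, _, F, E, h, rfl⟩
  exact ⟨d, F, E, h, fun d' F' E' h' => hmin _ ⟨d', F', E', h', rfl⟩⟩

namespace IsMinimalFrame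

theorem swap (h : IsMinimalFrame g d F E) : IsMinimalFrame (fun w => (g w⁻¹)⁻¹) d E F where
  toIsFrame := h.toIsFrame.swap
  sum_le_sum d' F' E' h' := h.sum_le_sum d' E' F' (by simpa only [inv_inv] using h'.swap)

theorem eq_zero_of_mulVec_eq_smul (h : IsMinimalFrame g d F E) {m : ι} {f e : ℂ → ι → ℂ}
    (hfe : IsSection g (d m - 1) f e) {c : ι → ℂ} {t : ℂ} (ht : F 1 *ᵥ c = t • f 1) :
    c m = 0 := by
  by_contra hc
  have hsum := h.sum_le_sum _ _ _ (h.update m hfe hc ht)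
  rw [Finset.sum_update_of_mem (Finset.mem_univ m), ← Finset.add_sum_erase _ _ (Finset.mem_univ m),
    Finset.sdiff_singleton_eq_erase] at hsum
  lia

/-- A relation `F z₀ *ᵥ c = 0` makes the section `F *ᵥ c` vanish at `z₀`; dividing it by `z - z₀`
lowers its degree, so it could replace a column of `F` of largest degree. -/
theorem isUnit (h : IsMinimalFrame g d F E)
    (hg : DifferentiableOn ℂ (fun z => (g z).1) {0}ᶜ) (z₀ : ℂ) : IsUnit (F z₀) := by
  refine Matrix.mulVec_injective_iff_isUnit.1 <|
    (injective_iff_map_eq_zero (F z₀).mulVecLin).2 fun c hc₀ => ?_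
  by_contra hc
  obtain ⟨m, hm, hmax⟩ := exists_max_image (support c) d (toFinite _) (support_nonempty_iff.2 hc)
  obtain ⟨e, he⟩ := h.exists_isSection_mulVec hg hmax
  obtain ⟨e', he'⟩ := he.exists_isSection_dslope hg hc₀
  refine hm (h.eq_zero_of_mulVec_eq_smul he' (t := 1 - z₀) ?_)
  rw [sub_smul_dslope, show F z₀ *ᵥ c = 0 from hc₀, sub_zero]

end IsMinimalFrame

theorem exists_birkhoff_factorization {g : ℂ → Matrix ι ι ℂ}
    (hg : ∀ i j, DifferentiableOn ℂ (fun z => g z i j) {0}ᶜ) (hu : ∀ z ≠ 0, IsUnit (g z)) :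
    ∃ (a : ι → ℤ) (A B : ℂ → Matrix ι ι ℂ),
      (∀ i j, Differentiable ℂ fun z => A z i j) ∧ (∀ i j, Differentiable ℂ fun z => B z i j) ∧
      (∀ z, IsUnit (A z)) ∧ (∀ z, IsUnit (B z)) ∧
      ∀ z ≠ 0, g z = A z * Matrix.diagonal (fun i => z ^ a i) * B z⁻¹ := by
  choose! u hu using hu
  have hdiff : DifferentiableOn ℂ (fun z => (u z).1) {0}ᶜ :=
    (differentiableOn_matrix_iff.2 hg).congr hu
  obtain ⟨d, F, E, h⟩ := exists_isMinimalFrame hdiff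
  have hE : ∀ w, IsUnit (E w) := h.swap.isUnit <|
    (differentiableOn_units_inv hdiff).comp differentiableOn_inv fun w hw => inv_ne_zero hw
  refine ⟨-d, F, fun w => (E w)⁻¹, differentiable_matrix_iff.1 h.differentiable_zero,
    differentiable_matrix_iff.1 (differentiable_matrix_inv h.swap.differentiable_zero hE),
    h.isUnit hdiff, fun w => Matrix.isUnit_nonsing_inv_iff.2 (hE w), fun z hz => ?_⟩
  simp only [Pi.neg_apply]
  rw [h.mul_diagonal_eq hz, hu z hz, Matrix.mul_nonsing_inv_cancel_right _ _
    ((Matrix.isUnit_iff_isUnit_det _).1 (hE _))]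

end Frames

end BirkhoffFactorization

/-- Grothendieck's splitting theorem over `ℂP¹`, in clutching form.  A
holomorphic vector bundle of rank `n` over `ℂP¹` is given by a transition
matrix `g`, holomorphic and invertible on `ℂ \ {0}` (the overlap of the two
standard charts).  The theorem asserts Birkhoff factorization
`g(z) = A(z) · diag(z^{a₁}, …, z^{a_n}) · B(1/z)` with `A`, `B` holomorphic
and invertible on all of `ℂ`, i.e. the bundle is isomorphic to
`O(a₁) ⊕ ⋯ ⊕ O(a_n)`.  In particular (rank ≥ 2) every holomorphic line
subbundle admits a holomorphic complement. -/
theorem stmt7 (n : ℕ) (g : ℂ → Matrix (Fin n) (Fin n) ℂ)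
    (hg_hol : ∀ i j, AnalyticOn ℂ (fun z => g z i j) {z : ℂ | z ≠ 0})
    (hg_inv : ∀ z : ℂ, z ≠ 0 → IsUnit (g z)) :
    ∃ (a : Fin n → ℤ) (A B : ℂ → Matrix (Fin n) (Fin n) ℂ),
      (∀ i j, AnalyticOn ℂ (fun z => A z i j) Set.univ) ∧
      (∀ i j, AnalyticOn ℂ (fun z => B z i j) Set.univ) ∧
      (∀ z, IsUnit (A z)) ∧ (∀ z, IsUnit (B z)) ∧
      ∀ z : ℂ, z ≠ 0 →
        g z = A z * Matrix.diagonal (fun i => z ^ (a i)) * B z⁻¹ := by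
  obtain ⟨a, A, B, hA, hB, hA', hB', h⟩ :=
    BirkhoffFactorization.exists_birkhoff_factorization
      (fun i j => (hg_hol i j).differentiableOn) hg_inv
  exact ⟨a, A, B,
    fun i j => ((hA i j).differentiableOn.analyticOnNhd isOpen_univ).analyticOn,
    fun i j => ((hB i j).differentiableOn.analyticOnNhd isOpen_univ).analyticOn, hA', hB', h⟩
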